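/- Let n ≥ 3 and let K_S = {A ∈ SU(n) : A_{in} = A_{ni} = 0 for all i < n} and K_T = {A ∈ SU(n) : A_{1i} = A_{i1} = 0 for all i > 1} be the upper-left and lower-right block subgroups of SU(n), each isomorphic to S(U(n−1)×U(1)). Let σ be a continuous finite-dimensional irreducible unitary representation of K_S and let ε > 0. Then there are, up to unitary equivalence, only finitely many continuous finite-dimensional irreducible unitary representations π of SU(n) whose representation space contains a unit vector ξ with p_σ ξ = ξ and a unit vector η with π(h)η = η for all h ∈ K_T, such that |⟨η, ξ⟩| > ε. -/

import Mathlib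

/-!
If infinitely many inequivalent `π` qualified, choose a sequence `π k` of them with vectors `η k`,
`ξ k`, and let `φ k (g) = ⟨η k, π k (g) η k⟩`. By Schur's lemma the `φ k` are pairwise orthogonal in
`L²(SU(m))`, and they are bounded by one, so they tend weakly to zero.

Since `η k` is fixed by the lower-right block subgroup, `φ k` is a function of `|g₀₀|` alone
(`FinUnitaryRep.coef_eq_of_norm_eq`): this modulus separates the double cosets. The upper-left block
subgroup is a null set of `SU(m)`, but for `m ≥ 3` the law of `|h₀₀|²` for random `h` in it is
absolutely continuous with respect to the law of `|g₀₀|²` for random `g` in `SU(m)`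
(`absolutelyContinuous_map_corner`). To see this without computing densities, let the group act on
Lebesgue-random vectors: by Fubini, the null sets of each law are those of the random variable
`|z₀|² / (|z₀|² + ∑_{j ∈ I} |z_{j+1}|²)` for a suitable nonempty index set `I`
(`ae_corner_iff_ae_ratio`), and by dilation invariance these do not depend on `I`
(`ae_ratio_notMem_iff`). A uniformly bounded, weakly null sequence is null against integrable
densities, so the integrals of `φ k` against continuous functions on the upper-left block subgroup
tend to zero (`tendsto_integral_coef_lastBlock`).

Finally `⟨η k, ξ k⟩ = ⟨p_σ η k, ξ k⟩`, and `‖p_σ η k‖²` is bounded by a multiple, depending only on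
`σ`, of the sum of the moduli of the integrals of `φ k` against the matrix coefficients of `σ`
(`FinUnitaryRep.norm_dotProduct_sq_le_sum`). Hence `⟨η k, ξ k⟩ → 0`, contradicting
`ε < |⟨η k, ξ k⟩|`.
-/

open MeasureTheory ComplexConjugate Matrix

noncomputable section

/-- A continuous finite-dimensional unitary (matrix) representation of a topological group. -/
structure FinUnitaryRep (Γ : Type) [Group Γ] [TopologicalSpace Γ] where
  dim : ℕ
  ρ : Γ →* Matrix.unitaryGroup (Fin dim) ℂ
  cont : Continuous fun g => (ρ g : Matrix (Fin dim) (Fin dim) ℂ)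

namespace FinUnitaryRep

variable {Γ : Type} [Group Γ] [TopologicalSpace Γ]

/-- The character of a finite-dimensional representation. -/
def char (σ : FinUnitaryRep Γ) : Γ → ℂ :=
  fun g => Matrix.trace ((σ.ρ g : Matrix (Fin σ.dim) (Fin σ.dim) ℂ))

/-- Irreducibility: no nontrivial invariant subspace (and nonzero). -/
def IsIrreducible (σ : FinUnitaryRep Γ) : Prop :=
  0 < σ.dim ∧ ∀ W : Submodule ℂ (Fin σ.dim → ℂ),
    (∀ g : Γ, ∀ v ∈ W, Matrix.mulVec ((σ.ρ g : Matrix (Fin σ.dim) (Fin σ.dim) ℂ)) v ∈ W) →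
    W = ⊥ ∨ W = ⊤

/-- Restriction of a representation along a continuous group homomorphism. -/
@[reducible] def res {Δ : Type} [Group Δ] [TopologicalSpace Δ] (f : Δ →* Γ) (hf : Continuous f)
    (π : FinUnitaryRep Γ) : FinUnitaryRep Δ :=
  ⟨π.dim, π.ρ.comp f, π.cont.comp hf⟩

end FinUnitaryRep

variable {Γ : Type} [Group Γ] [TopologicalSpace Γ] [MeasurableSpace Γ]

/-- The isotypical projection `p_σ = (dim σ) ∫ conj (χ_σ h) U h dμ(h)` associated to an
irreducible representation `σ`, for a representation `U` on a normed space. -/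
def isoProj (μ : Measure Γ) {E : Type} [NormedAddCommGroup E] [NormedSpace ℂ E]
    (U : Γ →* (E →L[ℂ] E)) (σ : FinUnitaryRep Γ) : E →L[ℂ] E :=
  (σ.dim : ℂ) • ∫ h, (conj (σ.char h)) • U h ∂μ

/-- The isotypical projection on the representation space of a finite-dimensional
representation `π`, associated to an irreducible representation `σ`. -/
def isoVecProj (μ : Measure Γ) (π : FinUnitaryRep Γ) (σ : FinUnitaryRep Γ)
    (v : Fin π.dim → ℂ) : Fin π.dim → ℂ :=
  (σ.dim : ℂ) • ∫ h, (conj (σ.char h)) • Matrix.mulVec ((π.ρ h : Matrix (Fin π.dim) (Fin π.dim) ℂ)) v ∂μ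

variable {E₁ E₂ : Type} [NormedAddCommGroup E₁] [NormedSpace ℂ E₁]
  [NormedAddCommGroup E₂] [NormedSpace ℂ E₂]

/-- `B` is harmonically finite if `p_σ B p_τ = 0` for all but finitely many pairs of
(unitary equivalence classes of) irreducible representations, identified by their characters. -/
def HarmonicallyFinite (μ : Measure Γ) (U₁ : Γ →* (E₁ →L[ℂ] E₁)) (U₂ : Γ →* (E₂ →L[ℂ] E₂))
    (B : E₁ →L[ℂ] E₂) : Prop :=
  {χ : (Γ → ℂ) × (Γ → ℂ) | ∃ σ τ : FinUnitaryRep Γ, σ.IsIrreducible ∧ τ.IsIrreducible ∧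
    χ.1 = σ.char ∧ χ.2 = τ.char ∧
    (isoProj μ U₂ σ).comp (B.comp (isoProj μ U₁ τ)) ≠ 0}.Finite

/-- `B` is harmonically proper if each row and column of its harmonic matrix is finite. -/
def HarmonicallyProper (μ : Measure Γ) (U₁ : Γ →* (E₁ →L[ℂ] E₁)) (U₂ : Γ →* (E₂ →L[ℂ] E₂))
    (B : E₁ →L[ℂ] E₂) : Prop :=
  ∀ σ : FinUnitaryRep Γ, σ.IsIrreducible →
    {χ : Γ → ℂ | ∃ τ : FinUnitaryRep Γ, τ.IsIrreducible ∧ χ = τ.char ∧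
      ((isoProj μ U₂ σ).comp (B.comp (isoProj μ U₁ τ)) ≠ 0 ∨
       (isoProj μ U₂ τ).comp (B.comp (isoProj μ U₁ σ)) ≠ 0)}.Finite

/-- The operator-norm closure of the harmonically finite operators. -/
def KH (μ : Measure Γ) (U₁ : Γ →* (E₁ →L[ℂ] E₁)) (U₂ : Γ →* (E₂ →L[ℂ] E₂)) :
    Set (E₁ →L[ℂ] E₂) :=
  closure {B | HarmonicallyFinite μ U₁ U₂ B}

/-- The operator-norm closure of the harmonically proper operators. -/
def AH (μ : Measure Γ) (U₁ : Γ →* (E₁ →L[ℂ] E₁)) (U₂ : Γ →* (E₂ →L[ℂ] E₂)) :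
    Set (E₁ →L[ℂ] E₂) :=
  closure {B | HarmonicallyProper μ U₁ U₂ B}

end
noncomputable section

/-- The special unitary group `SU(m)`: the subgroup of the unitary group consisting of
matrices of determinant `1`. -/
def SUsub (m : ℕ) : Subgroup (Matrix.unitaryGroup (Fin m) ℂ) where
  carrier := {A | (A : Matrix (Fin m) (Fin m) ℂ).det = 1}
  one_mem' := by simp
  mul_mem' := by
    intro a b ha hb
    simp only [Set.mem_setOf_eq] at *
    rw [Matrix.UnitaryGroup.mul_val, Matrix.det_mul, ha, hb, mul_one]
  inv_mem' := by
    intro a ha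
    simp only [Set.mem_setOf_eq] at *
    rw [Matrix.UnitaryGroup.inv_val, Matrix.star_eq_conjTranspose, Matrix.det_conjTranspose, ha,
      star_one]

/-- The group `SU(m)`. -/
abbrev SU (m : ℕ) := SUsub m

/-- The underlying matrix of an element of `SU(m)`. -/
def SU.toMat {m : ℕ} (A : SU m) : Matrix (Fin m) (Fin m) ℂ :=
  ((A : Matrix.unitaryGroup (Fin m) ℂ) : Matrix (Fin m) (Fin m) ℂ)

instance (m : ℕ) : MeasurableSpace (SU m) := borel _
instance (m : ℕ) : BorelSpace (SU m) := ⟨rfl⟩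

/-- The "upper-left block" subgroup `K_S` of `SU(m)`: those matrices whose last row and
column vanish off the diagonal (isomorphic to `S(U(m−1) × U(1))`). -/
def lastBlock (m : ℕ) : Subgroup (SU m) where
  carrier := {A | ∀ i j : Fin m,
    (((j : ℕ) = m - 1 ∧ (i : ℕ) ≠ m - 1) ∨ ((i : ℕ) = m - 1 ∧ (j : ℕ) ≠ m - 1)) →
    SU.toMat A i j = 0}
  one_mem' := by
    intro i j hij
    have hne : i ≠ j := by
      rcases hij with ⟨hj, hi⟩ | ⟨hi, hj⟩
      · exact fun h => hi (by rw [h, hj])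
      · exact fun h => hj (by rw [← h, hi])
    show SU.toMat (1 : SU m) i j = 0
    have h1 : SU.toMat (1 : SU m) = (1 : Matrix (Fin m) (Fin m) ℂ) := rfl
    rw [h1, Matrix.one_apply_ne hne]
  mul_mem' := by
    intro A B hA hB i j hij
    show SU.toMat (A * B) i j = 0
    have h1 : SU.toMat (A * B) = SU.toMat A * SU.toMat B := rfl
    rw [h1, Matrix.mul_apply]
    refine Finset.sum_eq_zero fun l _ => ?_
    rcases hij with ⟨hj, hi⟩ | ⟨hi, hj⟩
    · by_cases hl : (l : ℕ) = m - 1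
      · rw [hA i l (Or.inl ⟨hl, hi⟩), zero_mul]
      · rw [hB l j (Or.inl ⟨hj, hl⟩), mul_zero]
    · by_cases hl : (l : ℕ) = m - 1
      · rw [hB l j (Or.inr ⟨hl, hj⟩), mul_zero]
      · rw [hA i l (Or.inr ⟨hi, hl⟩), zero_mul]
  inv_mem' := by
    intro A hA i j hij
    show SU.toMat A⁻¹ i j = 0
    have h1 : SU.toMat A⁻¹ = star (SU.toMat A) := rfl
    rw [h1, Matrix.star_apply]
    rcases hij with h | h
    · rw [hA j i (Or.inr h), star_zero]
    · rw [hA j i (Or.inl h), star_zero]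

/-- The "lower-right block" subgroup `K_T` of `SU(m)`: those matrices whose first row and
column vanish off the diagonal (isomorphic to `S(U(1) × U(m−1))`). -/
def firstBlock (m : ℕ) : Subgroup (SU m) where
  carrier := {A | ∀ i j : Fin m,
    (((j : ℕ) = 0 ∧ (i : ℕ) ≠ 0) ∨ ((i : ℕ) = 0 ∧ (j : ℕ) ≠ 0)) →
    SU.toMat A i j = 0}
  one_mem' := by
    intro i j hij
    have hne : i ≠ j := by
      rcases hij with ⟨hj, hi⟩ | ⟨hi, hj⟩
      · exact fun h => hi (by rw [h, hj])
      · exact fun h => hj (by rw [← h, hi])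
    show SU.toMat (1 : SU m) i j = 0
    have h1 : SU.toMat (1 : SU m) = (1 : Matrix (Fin m) (Fin m) ℂ) := rfl
    rw [h1, Matrix.one_apply_ne hne]
  mul_mem' := by
    intro A B hA hB i j hij
    show SU.toMat (A * B) i j = 0
    have h1 : SU.toMat (A * B) = SU.toMat A * SU.toMat B := rfl
    rw [h1, Matrix.mul_apply]
    refine Finset.sum_eq_zero fun l _ => ?_
    rcases hij with ⟨hj, hi⟩ | ⟨hi, hj⟩
    · by_cases hl : (l : ℕ) = 0
      · rw [hA i l (Or.inl ⟨hl, hi⟩), zero_mul]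
      · rw [hB l j (Or.inl ⟨hj, hl⟩), mul_zero]
    · by_cases hl : (l : ℕ) = 0
      · rw [hB l j (Or.inr ⟨hl, hj⟩), mul_zero]
      · rw [hA i l (Or.inr ⟨hi, hl⟩), zero_mul]
  inv_mem' := by
    intro A hA i j hij
    show SU.toMat A⁻¹ i j = 0
    have h1 : SU.toMat A⁻¹ = star (SU.toMat A) := rfl
    rw [h1, Matrix.star_apply]
    rcases hij with h | h
    · rw [hA j i (Or.inr h), star_zero]
    · rw [hA j i (Or.inl h), star_zero]

end

/-! ### The compact group `SU(m)` and its block subgroup -/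

section

instance instSecondCountableSU (m : ℕ) : SecondCountableTopology (SU m) := by
  have : SecondCountableTopology (Matrix (Fin m) (Fin m) ℂ) :=
    inferInstanceAs (SecondCountableTopology (Fin m → Fin m → ℂ))
  exact (Topology.IsInducing.subtypeVal.comp
    Topology.IsInducing.subtypeVal :
      Topology.IsInducing (fun A : SU m => SU.toMat A)).secondCountableTopology

theorem continuous_toMat (m : ℕ) : Continuous (SU.toMat : SU m → _) :=
  continuous_subtype_val.comp continuous_subtype_val

theorem continuous_toMat_apply {m : ℕ} (i j : Fin m) :
    Continuous (fun A : SU m => SU.toMat A i j) :=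
  (continuous_toMat m).matrix_elem i j

theorem toMat_mem {m : ℕ} (A : SU m) : SU.toMat A ∈ Matrix.unitaryGroup (Fin m) ℂ :=
  (A : Matrix.unitaryGroup (Fin m) ℂ).2

theorem toMat_det {m : ℕ} (A : SU m) : (SU.toMat A).det = 1 := A.2

theorem toMat_mul {m : ℕ} (A B : SU m) : SU.toMat (A * B) = SU.toMat A * SU.toMat B := rfl

theorem toMat_inv {m : ℕ} (A : SU m) : SU.toMat A⁻¹ = (SU.toMat A)ᴴ := rfl

theorem toMat_one {m : ℕ} : SU.toMat (1 : SU m) = 1 := rfl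

theorem toMat_injective {m : ℕ} : Function.Injective (SU.toMat : SU m → _) :=
  fun _ _ h => Subtype.ext (Subtype.ext h)

/-- The element of `SU(m)` given by a unitary matrix of determinant one. -/
def mkSU {m : ℕ} (A : Matrix (Fin m) (Fin m) ℂ) (h : A ∈ Matrix.unitaryGroup (Fin m) ℂ)
    (hd : A.det = 1) : SU m := ⟨⟨A, h⟩, hd⟩

theorem toMat_mkSU {m : ℕ} (A : Matrix (Fin m) (Fin m) ℂ) (h : A ∈ Matrix.unitaryGroup (Fin m) ℂ)
    (hd : A.det = 1) : SU.toMat (mkSU A h hd) = A := rfl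

/-- `SU(m)` is closed in the product of the closed unit discs of the entries. -/
instance instCompactSU (m : ℕ) : CompactSpace (SU m) := by
  have hemb : Topology.IsInducing (fun A : SU m => SU.toMat A) :=
    Topology.IsInducing.subtypeVal.comp Topology.IsInducing.subtypeVal
  rw [← isCompact_univ_iff, hemb.isCompact_iff]
  have hK : IsCompact {A : Matrix (Fin m) (Fin m) ℂ | ∀ i j, A i j ∈ Metric.closedBall (0:ℂ) 1} := by
    have h : IsCompact {A : Fin m → Fin m → ℂ | ∀ i j, A i j ∈ Metric.closedBall (0:ℂ) 1} := by
      have h1 := isCompact_univ_pi (fun _ : Fin m => isCompact_univ_pi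
        (fun _ : Fin m => isCompact_closedBall (0:ℂ) 1))
      have h2 : {A : Fin m → Fin m → ℂ | ∀ i j, A i j ∈ Metric.closedBall (0:ℂ) 1} =
          Set.univ.pi fun _ => Set.univ.pi fun _ => Metric.closedBall (0:ℂ) 1 := by
        ext A
        simp [Set.mem_pi]
      rwa [h2]
    exact h
  refine hK.of_isClosed_subset ?_ ?_
  · have : (fun A : SU m => SU.toMat A) '' Set.univ =
        {A | A * Aᴴ = 1} ∩ {A | A.det = 1} := by
      ext A
      constructor
      · rintro ⟨B, -, rfl⟩
        exact ⟨Matrix.mem_unitaryGroup_iff.1 (toMat_mem B), toMat_det B⟩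
      · rintro ⟨h1, h2⟩
        exact ⟨mkSU A (Matrix.mem_unitaryGroup_iff.2 h1) h2, trivial, rfl⟩
    rw [this]
    refine IsClosed.inter (isClosed_eq ?_ continuous_const) (isClosed_eq ?_ continuous_const)
    · exact continuous_id.matrix_mul continuous_id.matrix_conjTranspose
    · exact continuous_id.matrix_det
  · rintro _ ⟨B, -, rfl⟩ i j
    simpa using entry_norm_bound_of_unitary (toMat_mem B) i j

theorem isClosed_lastBlock (m : ℕ) : IsClosed (lastBlock m : Set (SU m)) := by
  have : (lastBlock m : Set (SU m)) = ⋂ i : Fin m, ⋂ j : Fin m,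
      ⋂ (_ : (((j : ℕ) = m - 1 ∧ (i : ℕ) ≠ m - 1) ∨ ((i : ℕ) = m - 1 ∧ (j : ℕ) ≠ m - 1))),
        {A : SU m | SU.toMat A i j = 0} := by
    ext A
    simp only [Set.mem_iInter]
    rfl
  rw [this]
  exact isClosed_iInter fun i => isClosed_iInter fun j => isClosed_iInter fun _ =>
    isClosed_eq (continuous_toMat_apply i j) continuous_const

instance instCompactLastBlock (m : ℕ) : CompactSpace (lastBlock m) :=
  isCompact_iff_compactSpace.1 (isClosed_lastBlock m).isCompact

/-- Compact groups are unimodular. -/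
theorem isMulRightInvariant_of_compact {G : Type*} [Group G] [TopologicalSpace G]
    [IsTopologicalGroup G] [CompactSpace G] [MeasurableSpace G] [BorelSpace G]
    (μ : Measure G) [μ.IsHaarMeasure] [IsProbabilityMeasure μ] : μ.IsMulRightInvariant := by
  refine ⟨fun g => ?_⟩
  have : IsProbabilityMeasure (μ.map (· * g)) :=
    Measure.isProbabilityMeasure_map (continuous_mul_const g).measurable.aemeasurable
  have : (μ.map (· * g)).IsHaarMeasure := Measure.isHaarMeasure_map_mul_right μ g
  exact Measure.isHaarMeasure_eq_of_isProbabilityMeasure _ _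

end

/-! ### Matrix coefficients and Schur orthogonality -/

section

namespace FinUnitaryRep
variable {Γ : Type} [Group Γ] [TopologicalSpace Γ]

/-- The matrix `π(g)`. -/
def mat (π : FinUnitaryRep Γ) (g : Γ) : Matrix (Fin π.dim) (Fin π.dim) ℂ :=
  (π.ρ g : Matrix (Fin π.dim) (Fin π.dim) ℂ)

theorem mat_mul (π : FinUnitaryRep Γ) (g h : Γ) : π.mat (g * h) = π.mat g * π.mat h := by
  simp [mat]

theorem mat_one (π : FinUnitaryRep Γ) : π.mat 1 = 1 := by simp [mat]

theorem mat_inv (π : FinUnitaryRep Γ) (g : Γ) : π.mat g⁻¹ = (π.mat g)ᴴ := by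
  simp [mat, Matrix.star_eq_conjTranspose]

theorem mat_mem (π : FinUnitaryRep Γ) (g : Γ) : π.mat g ∈ Matrix.unitaryGroup (Fin π.dim) ℂ :=
  (π.ρ g).2

theorem continuous_mat (π : FinUnitaryRep Γ) : Continuous π.mat := π.cont

theorem continuous_mat_apply (π : FinUnitaryRep Γ) (i j : Fin π.dim) :
    Continuous fun g => π.mat g i j := π.cont.matrix_elem i j

/-- Schur's lemma: a nonzero intertwiner between irreducible representations is invertible, so
the two characters agree. -/
theorem char_eq_of_intertwiner (π π' : FinUnitaryRep Γ) (h : π.IsIrreducible)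
    (h' : π'.IsIrreducible) (T : Matrix (Fin π.dim) (Fin π'.dim) ℂ)
    (hT : ∀ g, π.mat g * T = T * π'.mat g) (hT0 : T ≠ 0) : π.char = π'.char := by
  have hker : LinearMap.ker T.mulVecLin = ⊥ := by
    refine (h'.2 (LinearMap.ker T.mulVecLin) ?_).resolve_right ?_
    · intro g v hv
      rw [LinearMap.mem_ker, Matrix.mulVecLin_apply] at hv ⊢
      change T *ᵥ (π'.mat g *ᵥ v) = 0
      rw [Matrix.mulVec_mulVec, ← hT, ← Matrix.mulVec_mulVec, hv, Matrix.mulVec_zero]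
    · intro htop
      apply hT0
      rw [LinearMap.ker_eq_top] at htop
      refine Matrix.ext_of_mulVec_single fun i => ?_
      rw [Matrix.zero_mulVec]
      exact LinearMap.congr_fun htop (Pi.single i 1)
  have hran : LinearMap.range T.mulVecLin = ⊤ := by
    refine (h.2 (LinearMap.range T.mulVecLin) ?_).resolve_left ?_
    · rintro g _ ⟨v, rfl⟩
      refine ⟨π'.mat g *ᵥ v, ?_⟩
      change T *ᵥ (π'.mat g *ᵥ v) = π.mat g *ᵥ (T *ᵥ v)
      rw [Matrix.mulVec_mulVec, Matrix.mulVec_mulVec, hT]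
    · intro hbot
      apply hT0
      rw [LinearMap.range_eq_bot] at hbot
      refine Matrix.ext_of_mulVec_single fun i => ?_
      rw [Matrix.zero_mulVec]
      exact LinearMap.congr_fun hbot (Pi.single i 1)
  let e : (Fin π'.dim → ℂ) ≃ₗ[ℂ] (Fin π.dim → ℂ) :=
    LinearEquiv.ofBijective T.mulVecLin ⟨LinearMap.ker_eq_bot.1 hker, LinearMap.range_eq_top.1 hran⟩
  funext g
  have key : (π.mat g).mulVecLin = e.conj (π'.mat g).mulVecLin := by
    refine LinearMap.ext fun w => ?_
    rw [LinearEquiv.conj_apply]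
    simp only [LinearMap.comp_apply, LinearEquiv.coe_coe]
    obtain ⟨v, hv⟩ := e.surjective w
    rw [← hv, e.symm_apply_apply]
    change π.mat g *ᵥ (T *ᵥ v) = T *ᵥ (π'.mat g *ᵥ v)
    rw [Matrix.mulVec_mulVec, Matrix.mulVec_mulVec, hT]
  change (π.mat g).trace = (π'.mat g).trace
  have h1 : ∀ {d : ℕ} (A : Matrix (Fin d) (Fin d) ℂ),
      A.trace = LinearMap.trace ℂ _ A.mulVecLin := by
    intro d A
    rw [← Matrix.toLin'_apply', Matrix.trace_toLin'_eq]
  rw [h1, h1, key, LinearMap.trace_conj']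

/-- The diagonal matrix coefficient `g ↦ ⟨η, π(g)η⟩`. -/
def coef (π : FinUnitaryRep Γ) (η : Fin π.dim → ℂ) (g : Γ) : ℂ := star η ⬝ᵥ (π.mat g *ᵥ η)

theorem continuous_coef (π : FinUnitaryRep Γ) (η : Fin π.dim → ℂ) : Continuous (π.coef η) :=
  continuous_const.dotProduct (π.continuous_mat.matrix_mulVec continuous_const)

/-- Schur orthogonality for diagonal matrix coefficients of inequivalent irreducible
representations. -/
theorem integral_coef_mul_conj_eq_zero [IsTopologicalGroup Γ] [CompactSpace Γ] [MeasurableSpace Γ]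
    [BorelSpace Γ] (μ : Measure Γ) [μ.IsHaarMeasure] (π π' : FinUnitaryRep Γ)
    (h : π.IsIrreducible) (h' : π'.IsIrreducible) (hne : π.char ≠ π'.char)
    (η : Fin π.dim → ℂ) (η' : Fin π'.dim → ℂ) :
    ∫ g, π.coef η g * conj (π'.coef η' g) ∂μ = 0 := by
  -- Averaging the rank-one operator `η η'ᴴ` over the group produces an intertwiner `T`.
  set A : Matrix (Fin π.dim) (Fin π'.dim) ℂ := vecMulVec η (star η') with hA
  set F : Γ → Matrix (Fin π.dim) (Fin π'.dim) ℂ := fun g => π.mat g * A * (π'.mat g)ᴴ with hF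
  have hFc : Continuous F :=
    (π.continuous_mat.matrix_mul continuous_const).matrix_mul
      π'.continuous_mat.matrix_conjTranspose
  have hcint : ∀ i j, Integrable (fun g => F g i j) μ := fun i j =>
    (hFc.matrix_elem i j).integrable_of_hasCompactSupport (HasCompactSupport.of_compactSpace _)
  set T : Matrix (Fin π.dim) (Fin π'.dim) ℂ := Matrix.of fun i j => ∫ g, F g i j ∂μ with hTdef
  have hF1 : ∀ x g, π.mat x * F g = F (x * g) * π'.mat x := by
    intro x g
    have hu : (π'.mat x)ᴴ * π'.mat x = 1 := Matrix.mem_unitaryGroup_iff'.1 (π'.mat_mem x)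
    simp only [hF, mat_mul, Matrix.conjTranspose_mul, Matrix.mul_assoc, hu, Matrix.mul_one]
  have hT : ∀ x, π.mat x * T = T * π'.mat x := by
    intro x
    ext i j
    have e1 : (π.mat x * T) i j = ∫ g, (π.mat x * F g) i j ∂μ := by
      simp only [Matrix.mul_apply, hTdef, Matrix.of_apply]
      rw [integral_finsetSum _ fun k _ => (hcint k j).const_mul _]
      simp only [integral_const_mul]
    have e2 : (T * π'.mat x) i j = ∫ g, (F g * π'.mat x) i j ∂μ := by
      simp only [Matrix.mul_apply, hTdef, Matrix.of_apply]
      rw [integral_finsetSum _ fun k _ => (hcint i k).mul_const _]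
      simp only [integral_mul_const]
    rw [e1, e2]
    simp only [hF1]
    exact integral_mul_left_eq_self (fun g => (F g * π'.mat x) i j) x
  have hT0 : T = 0 := by
    by_contra h0
    exact hne (char_eq_of_intertwiner π π' h h' T hT h0)
  have e3 : ∀ g, π.coef η g * conj (π'.coef η' g) = star η ⬝ᵥ (F g *ᵥ η') := by
    intro g
    have c1 : conj (π'.coef η' g) = star η' ⬝ᵥ ((π'.mat g)ᴴ *ᵥ η') := by
      rw [coef, ← Complex.star_def, ← Matrix.star_dotProduct, star_mulVec, Matrix.dotProduct_mulVec]
    rw [c1, hF]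
    simp only [coef, ← Matrix.mulVec_mulVec, hA]
    rw [Matrix.vecMulVec_mulVec]
    simp [Matrix.mulVec_smul, mul_comm]
  simp only [e3]
  have e4 : ∫ g, star η ⬝ᵥ (F g *ᵥ η') ∂μ = star η ⬝ᵥ (T *ᵥ η') := by
    simp only [dotProduct, mulVec, hTdef, Matrix.of_apply]
    rw [integral_finsetSum _ fun i _ => (integrable_finsetSum _ fun j _ =>
      (hcint i j).mul_const _).const_mul _]
    refine Finset.sum_congr rfl fun i _ => ?_
    rw [integral_const_mul, integral_finsetSum _ fun j _ => (hcint i j).mul_const _]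
    simp only [integral_mul_const]
  rw [e4, hT0]
  simp

theorem dotProduct_unitary {d : ℕ} {U : Matrix (Fin d) (Fin d) ℂ}
    (hU : U ∈ Matrix.unitaryGroup (Fin d) ℂ) (v w : Fin d → ℂ) :
    star (U *ᵥ v) ⬝ᵥ (U *ᵥ w) = star v ⬝ᵥ w := by
  have hu : Uᴴ * U = 1 := Matrix.mem_unitaryGroup_iff'.1 hU
  rw [star_mulVec, ← Matrix.dotProduct_mulVec, Matrix.mulVec_mulVec, hu, Matrix.one_mulVec]

/-- The Cauchy–Schwarz inequality. -/
theorem norm_dotProduct_sq_le {d : ℕ} (v w : Fin d → ℂ) :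
    ‖star v ⬝ᵥ w‖ ^ 2 ≤ (star v ⬝ᵥ v).re * (star w ⬝ᵥ w).re := by
  have h := norm_inner_le_norm (𝕜 := ℂ) (WithLp.toLp 2 v) (WithLp.toLp 2 w)
  have e : ∀ u : Fin d → ℂ, ‖WithLp.toLp 2 u‖ ^ 2 = (star u ⬝ᵥ u).re := by
    intro u
    rw [← inner_self_eq_norm_sq (𝕜 := ℂ), EuclideanSpace.inner_eq_star_dotProduct, dotProduct_comm]
    rfl
  rw [← e, ← e, ← mul_pow]
  rw [EuclideanSpace.inner_eq_star_dotProduct, dotProduct_comm] at h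
  exact pow_le_pow_left₀ (norm_nonneg _) h 2

theorem norm_coef_le (π : FinUnitaryRep Γ) (η : Fin π.dim → ℂ) (hη : star η ⬝ᵥ η = 1) (g : Γ) :
    ‖π.coef η g‖ ≤ 1 := by
  have := norm_dotProduct_sq_le η (π.mat g *ᵥ η)
  rw [dotProduct_unitary (π.mat_mem g), hη] at this
  simp only [Complex.one_re, mul_one] at this
  exact (sq_le_one_iff₀ (norm_nonneg _)).1 this

end FinUnitaryRep

end

/-! ### Weak convergence to zero of orthogonal sequences -/

section

/-- Bessel's inequality in its qualitative form: bounded nonzero pairwise orthogonal vectors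
converge weakly to zero. -/
theorem tendsto_inner_zero_of_orthogonal {E : Type*} [NormedAddCommGroup E]
    [InnerProductSpace ℂ E] (v : ℕ → E) (hv0 : ∀ k, v k ≠ 0) {C : ℝ} (hv : ∀ k, ‖v k‖ ≤ C)
    (ho : ∀ k l, k ≠ l → inner ℂ (v k) (v l) = 0) (x : E) :
    Filter.Tendsto (fun k => inner ℂ x (v k)) Filter.atTop (nhds 0) := by
  set e : ℕ → E := fun k => ((‖v k‖⁻¹ : ℝ) : ℂ) • v k with he
  have hon : Orthonormal ℂ e := by
    refine ⟨fun k => ?_, fun k l hkl => ?_⟩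
    · rw [he]
      simp [norm_smul, hv0 k]
    · simp only [he, inner_smul_left, inner_smul_right, ho k l hkl, mul_zero]
  have hs : Filter.Tendsto (fun k => ‖inner ℂ (e k) x‖ ^ 2) Filter.atTop (nhds 0) :=
    (hon.inner_products_summable x).tendsto_atTop_zero
  have hs1 : Filter.Tendsto (fun k => ‖inner ℂ (e k) x‖) Filter.atTop (nhds 0) := by
    have := (Real.continuous_sqrt.tendsto 0).comp hs
    simpa [Function.comp_def, Real.sqrt_sq] using this
  have hs2 : Filter.Tendsto (fun k => C * ‖inner ℂ (e k) x‖) Filter.atTop (nhds 0) := by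
    simpa using hs1.const_mul C
  refine squeeze_zero_norm (fun k => ?_) hs2
  have : v k = ((‖v k‖ : ℝ) : ℂ) • e k := by
    rw [he]
    simp only [smul_smul, ← Complex.ofReal_mul]
    rw [mul_inv_cancel₀ (norm_ne_zero_iff.2 (hv0 k))]
    simp
  rw [this, inner_smul_right, norm_mul, norm_inner_symm]
  simp only [Complex.norm_real, norm_norm]
  exact mul_le_mul_of_nonneg_right (hv k) (norm_nonneg _)

/-- Pairwise orthogonal functions of modulus at most one tend to zero weakly in `L²`; continuous
functions suffice as test functions. -/
theorem tendsto_integral_of_orthogonal {G : Type*} [TopologicalSpace G] [CompactSpace G]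
    [MeasurableSpace G] [BorelSpace G] (μ : Measure G) [IsProbabilityMeasure μ] [μ.IsOpenPosMeasure]
    (φ : ℕ → C(G, ℂ)) (h0 : ∀ k, φ k ≠ 0) (h1 : ∀ k g, ‖φ k g‖ ≤ 1)
    (ho : ∀ k l, k ≠ l → ∫ g, φ k g * conj (φ l g) ∂μ = 0) (f : C(G, ℂ)) :
    Filter.Tendsto (fun k => ∫ g, φ k g * conj (f g) ∂μ) Filter.atTop (nhds 0) := by
  have key := tendsto_inner_zero_of_orthogonal (fun k => ContinuousMap.toLp 2 μ ℂ (φ k))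
    (fun k h => h0 k (ContinuousMap.toLp_injective μ (by rw [h, map_zero])))
    (C := ‖(ContinuousMap.toLp 2 μ ℂ : C(G, ℂ) →L[ℂ] _)‖) (fun k => ?_) (fun k l hkl => ?_)
    (ContinuousMap.toLp 2 μ ℂ f)
  · simpa only [ContinuousMap.inner_toLp] using key
  · refine (ContinuousLinearMap.le_opNorm _ _).trans (mul_le_of_le_one_right (norm_nonneg _) ?_)
    exact (ContinuousMap.norm_le _ zero_le_one).2 (h1 k)
  · rw [ContinuousMap.inner_toLp]
    exact ho l k hkl.symm

/-- Pairwise orthogonal bounded functions factoring through `T` tend to zero weakly against every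
finite measure absolutely continuous with respect to the image measure: weak `L²` convergence
together with a uniform bound gives convergence against `L¹` densities. -/
theorem tendsto_integral_of_absolutelyContinuous {G X : Type*} [TopologicalSpace G] [CompactSpace G]
    [MeasurableSpace G] [BorelSpace G] (μ : Measure G) [IsProbabilityMeasure μ] [μ.IsOpenPosMeasure]
    [TopologicalSpace X] [TopologicalSpace.PseudoMetrizableSpace X] [MeasurableSpace X]
    [BorelSpace X] [SecondCountableTopology X]
    (T : G → X) (hT : Continuous T) (Ψ : ℕ → X → ℂ) (hΨ : ∀ k, Continuous (Ψ k))
    (h0 : ∀ k, ∃ g, Ψ k (T g) ≠ 0) (h1 : ∀ k x, ‖Ψ k x‖ ≤ 1)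
    (ho : ∀ k l, k ≠ l → ∫ g, Ψ k (T g) * conj (Ψ l (T g)) ∂μ = 0)
    (lam : Measure X) [IsFiniteMeasure lam] (hac : lam ≪ μ.map T) :
    Filter.Tendsto (fun k => ∫ x, Ψ k x ∂lam) Filter.atTop (nhds 0) := by
  set ν := μ.map T with hν
  have : IsProbabilityMeasure ν := Measure.isProbabilityMeasure_map hT.measurable.aemeasurable
  -- The density `D` of `lam` is only integrable; it is approximated in `L¹` by a bounded continuous
  -- function `g`, whose contribution is handled by the weak `L²` convergence.
  set D : X → ℝ := fun x => (lam.rnDeriv ν x).toReal with hD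
  have hDi : Integrable D ν := Measure.integrable_toReal_rnDeriv
  have hΨb : ∀ k, ∀ᵐ x ∂ν, ‖Ψ k x‖ ≤ 1 := fun k => Filter.Eventually.of_forall (h1 k)
  have hΨm : ∀ k, AEStronglyMeasurable (Ψ k) ν := fun k => (hΨ k).aestronglyMeasurable
  rw [Metric.tendsto_atTop]
  intro ε hε
  obtain ⟨g, hg, hgi⟩ := hDi.exists_boundedContinuous_integral_sub_le (half_pos hε)
  have hlim : Filter.Tendsto (fun k => ∫ x, (g x : ℂ) * Ψ k x ∂ν) Filter.atTop (nhds 0) := by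
    have h2 := tendsto_integral_of_orthogonal μ (fun k => ⟨fun a => Ψ k (T a), (hΨ k).comp hT⟩)
      (fun k h => by
        obtain ⟨a, ha⟩ := h0 k
        exact ha (DFunLike.congr_fun h a)) (fun k a => h1 k _) ho
      ⟨fun a => (g (T a) : ℂ), Complex.continuous_ofReal.comp (g.continuous.comp hT)⟩
    refine h2.congr fun k => ?_
    have hc : Continuous fun x => (g x : ℂ) * Ψ k x :=
      (Complex.continuous_ofReal.comp g.continuous).mul (hΨ k)
    rw [hν, integral_map hT.measurable.aemeasurable hc.aestronglyMeasurable]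
    refine integral_congr_ae (Filter.Eventually.of_forall fun a => ?_)
    simp [mul_comm]
  obtain ⟨N, hN⟩ := (Metric.tendsto_atTop.1 hlim) (ε / 2) (half_pos hε)
  refine ⟨N, fun k hk => ?_⟩
  have hsub : Integrable (fun x => D x - g x) ν := hDi.sub hgi
  have hi1 : Integrable (fun x => ((D x - g x : ℝ) : ℂ) * Ψ k x) ν :=
    hsub.ofReal.mul_bdd (c := 1) (hΨm k) (hΨb k)
  have hi2 : Integrable (fun x => ((g x : ℝ) : ℂ) * Ψ k x) ν :=
    hgi.ofReal.mul_bdd (c := 1) (hΨm k) (hΨb k)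
  have hsplit : ∫ x, Ψ k x ∂lam =
      (∫ x, ((D x - g x : ℝ) : ℂ) * Ψ k x ∂ν) + ∫ x, (g x : ℂ) * Ψ k x ∂ν := by
    rw [← integral_add hi1 hi2, ← integral_rnDeriv_smul hac]
    refine integral_congr_ae (Filter.Eventually.of_forall fun a => ?_)
    simp [hD]
    ring
  have hb : ‖∫ x, ((D x - g x : ℝ) : ℂ) * Ψ k x ∂ν‖ ≤ ε / 2 := by
    refine (norm_integral_le_of_norm_le hsub.norm (Filter.Eventually.of_forall fun x => ?_)).trans hg
    rw [norm_mul, Complex.norm_real]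
    exact mul_le_of_le_one_right (norm_nonneg _) (h1 k x)
  have h3 := hN k hk
  rw [dist_zero_right] at h3 ⊢
  rw [hsplit]
  calc _ ≤ _ := norm_add_le _ _
    _ < ε / 2 + ε / 2 := add_lt_add_of_le_of_lt hb h3
    _ = ε := add_halves ε

end

/-! ### Double cosets of the lower-right block subgroup -/

section

open scoped ComplexOrder in
/-- Complex Householder reflection: for unit vectors `u`, `v` there is a unitary matrix mapping `u`
to `v` and fixing every vector orthogonal to `u - v`. -/
theorem exists_unitary_mulVec_eq {d : ℕ} (u v : Fin d → ℂ) (hu : star u ⬝ᵥ u = 1)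
    (hv : star v ⬝ᵥ v = 1) : ∃ U ∈ Matrix.unitaryGroup (Fin d) ℂ, U *ᵥ u = v ∧
      ∀ x, star (u - v) ⬝ᵥ x = 0 → U *ᵥ x = x := by
  by_cases huv : u = v
  · exact ⟨1, one_mem _, by simp [huv], fun x _ => by simp⟩
  set w := u - v with hw
  have hw0 : w ≠ 0 := sub_ne_zero.2 huv
  set s := star w ⬝ᵥ u with hs
  have hs1 : s = 1 - star v ⬝ᵥ u := by rw [hs, hw, star_sub, sub_dotProduct, hu]
  have hsc : star s = 1 - star u ⬝ᵥ v := by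
    rw [hs1, star_sub, star_one, ← Matrix.star_dotProduct_star, star_star, dotProduct_comm]
  have hww : star w ⬝ᵥ w = s + star s := by
    rw [hsc, hs1, hw, star_sub, sub_dotProduct, dotProduct_sub, dotProduct_sub, hu, hv]
    ring
  have hs0 : s ≠ 0 := by
    intro h
    rw [h, star_zero, add_zero, dotProduct_star_self_eq_zero] at hww
    exact hw0 hww
  have hss0 : star s ≠ 0 := star_ne_zero.2 hs0
  have hU : ∀ x, (1 - s⁻¹ • vecMulVec w (star w)) *ᵥ x = x - (s⁻¹ * (star w ⬝ᵥ x)) • w := by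
    intro x
    rw [Matrix.sub_mulVec, Matrix.one_mulVec, Matrix.smul_mulVec, Matrix.vecMulVec_mulVec]
    ext i
    simp
    ring
  refine ⟨1 - s⁻¹ • vecMulVec w (star w), ?_, ?_, ?_⟩
  · rw [Matrix.mem_unitaryGroup_iff', Matrix.star_eq_conjTranspose, conjTranspose_sub,
      conjTranspose_one, conjTranspose_smul, conjTranspose_vecMulVec, star_star, sub_mul, mul_sub,
      mul_sub, one_mul, mul_one, one_mul, smul_mul_smul_comm, Matrix.vecMulVec_mul_vecMulVec, hww]
    ext i j
    simp [Matrix.vecMulVec_apply]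
    rw [Complex.star_def] at hss0
    field_simp
    ring
  · rw [hU, ← hs, inv_mul_cancel₀ hs0, one_smul, hw, sub_sub_cancel]
  · intro x hx
    rw [hU, hx]
    simp

/-- If a column of a unitary matrix vanishes off the diagonal, then so does the row with the same
index. -/
theorem row_eq_zero_of_col {d : ℕ} {U : Matrix (Fin d) (Fin d) ℂ}
    (hU : U ∈ Matrix.unitaryGroup (Fin d) ℂ) (l : Fin d) (h : ∀ i, i ≠ l → U i l = 0) (j : Fin d)
    (hj : j ≠ l) : U l j = 0 := by
  have hu : Uᴴ * U = 1 := Matrix.mem_unitaryGroup_iff'.1 hU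
  have h1 : ∀ j, (Uᴴ * U) l j = star (U l l) * U l j := by
    intro j
    rw [Matrix.mul_apply, Finset.sum_eq_single l]
    · rfl
    · intro i _ hi
      rw [conjTranspose_apply, h i hi, star_zero, zero_mul]
    · simp
  have h2 := h1 l
  have h3 := h1 j
  rw [hu, Matrix.one_apply_eq] at h2
  rw [hu, Matrix.one_apply_ne hj.symm] at h3
  have : star (U l l) ≠ 0 := left_ne_zero_of_mul (h2 ▸ one_ne_zero)
  exact (mul_eq_zero.1 h3.symm).resolve_left this

/-- The diagonal matrix with entry `c` at `l` and all other diagonal entries equal to one. -/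
noncomputable def phaseAt {d : ℕ} (l : Fin d) (c : ℂ) : Matrix (Fin d) (Fin d) ℂ :=
  Matrix.diagonal (Function.update 1 l c)

theorem phaseAt_det {d : ℕ} (l : Fin d) (c : ℂ) : (phaseAt l c).det = c := by
  rw [phaseAt, Matrix.det_diagonal, Finset.prod_update_of_mem (Finset.mem_univ l)]
  simp

theorem phaseAt_mem {d : ℕ} (l : Fin d) (c : ℂ) (hc : star c * c = 1) :
    phaseAt l c ∈ Matrix.unitaryGroup (Fin d) ℂ := by
  rw [Matrix.mem_unitaryGroup_iff', phaseAt, Matrix.star_eq_conjTranspose,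
    Matrix.diagonal_conjTranspose, Matrix.diagonal_mul_diagonal, ← Matrix.diagonal_one]
  congr 1
  funext i
  by_cases h : i = l
  · subst h
    simpa using hc
  · simp [h]

theorem star_det_mul_det {d : ℕ} {U : Matrix (Fin d) (Fin d) ℂ}
    (hU : U ∈ Matrix.unitaryGroup (Fin d) ℂ) : star U.det * U.det = 1 := by
  have hu : Uᴴ * U = 1 := Matrix.mem_unitaryGroup_iff'.1 hU
  rw [← Matrix.det_conjTranspose, ← Matrix.det_mul, hu, Matrix.det_one]

theorem star_dotProduct_self_eq_sum {d : ℕ} (u : Fin d → ℂ) :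
    star u ⬝ᵥ u = ((∑ i, ‖u i‖ ^ 2 : ℝ) : ℂ) := by
  rw [dotProduct]
  push_cast
  refine Finset.sum_congr rfl fun i _ => ?_
  rw [Pi.star_apply, Complex.star_def, Complex.conj_mul']

variable {n : ℕ}

/-- Every unit vector is the first column of a matrix in `SU(n+3)`; if its last coordinate
vanishes, the matrix can be taken in the upper-left block subgroup. -/
theorem exists_col_eq (u : Fin (n + 3) → ℂ) (hu : star u ⬝ᵥ u = 1) :
    ∃ k : SU (n + 3), (∀ i, SU.toMat k i 0 = u i) ∧
      (u (Fin.last _) = 0 → k ∈ lastBlock (n + 3)) := by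
  obtain ⟨U, hU, hU1, hU2⟩ := exists_unitary_mulVec_eq (Pi.single 0 1) u (by simp) hu
  have hd := star_det_mul_det hU
  have hdm := phaseAt_mem (Fin.last (n + 2)) (star U.det) (by rw [star_star, mul_comm]; exact hd)
  -- The phase in the last coordinate corrects the determinant without changing the first column.
  refine ⟨mkSU (U * phaseAt (Fin.last (n + 2)) (star U.det)) (mul_mem hU hdm) ?_, ?_, ?_⟩
  · rw [Matrix.det_mul, phaseAt_det, mul_comm, hd]
  · intro i
    rw [toMat_mkSU, phaseAt, Matrix.mul_diagonal, Function.update_of_ne (Fin.last_pos).ne,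
      ← hU1]
    simp
  · intro hl i j hij
    rw [toMat_mkSU, phaseAt, Matrix.mul_diagonal]
    have hcol : ∀ i, i ≠ Fin.last _ → U i (Fin.last _) = 0 := by
      intro i hi
      have := congr_fun (hU2 (Pi.single (Fin.last _) 1) (by simp [hl])) i
      simpa [hi] using this
    rcases hij with ⟨hj, hi⟩ | ⟨hi, hj⟩
    · have hj' : j = Fin.last _ := Fin.ext hj
      rw [hj', hcol i fun h => hi (by rw [h]; rfl), zero_mul]
    · have hi' : i = Fin.last _ := Fin.ext hi
      rw [hi', row_eq_zero_of_col hU _ hcol j fun h => hj (by rw [h]; rfl), zero_mul]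

/-- Under the lower-right block subgroup every unit vector can be moved to any unit vector with
the same first coordinate and vanishing last coordinate. -/
theorem exists_firstBlock_mulVec_eq (u v : Fin (n + 3) → ℂ) (hu : star u ⬝ᵥ u = 1)
    (hv : star v ⬝ᵥ v = 1) (h0 : u 0 = v 0) (hl : v (Fin.last _) = 0) :
    ∃ a ∈ firstBlock (n + 3), SU.toMat a *ᵥ u = v := by
  obtain ⟨U, hU, hU1, hU2⟩ := exists_unitary_mulVec_eq u v hu hv
  have hd := star_det_mul_det hU
  have hdm := phaseAt_mem (Fin.last (n + 2)) (star U.det) (by rw [star_star, mul_comm]; exact hd)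
  -- The phase correcting the determinant acts on a coordinate where `v` vanishes.
  refine ⟨mkSU (phaseAt (Fin.last (n + 2)) (star U.det) * U) (mul_mem hdm hU) ?_, ?_, ?_⟩
  · rw [Matrix.det_mul, phaseAt_det, hd]
  · intro i j hij
    rw [toMat_mkSU, phaseAt, Matrix.diagonal_mul]
    have hcol : ∀ i, i ≠ 0 → U i 0 = 0 := by
      intro i hi
      have := congr_fun (hU2 (Pi.single 0 1) (by simp [h0])) i
      simpa [hi] using this
    rcases hij with ⟨hj, hi⟩ | ⟨hi, hj⟩
    · have hj' : j = 0 := Fin.ext hj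
      rw [hj', hcol i fun h => hi (by rw [h]; rfl), mul_zero]
    · have hi' : i = 0 := Fin.ext hi
      rw [hi', row_eq_zero_of_col hU _ hcol j fun h => hj (by rw [h]; rfl), mul_zero]
  · rw [toMat_mkSU, ← Matrix.mulVec_mulVec, hU1, phaseAt]
    ext i
    rw [Matrix.mulVec_diagonal]
    by_cases hi : i = Fin.last _
    · rw [hi, hl, mul_zero]
    · simp [hi]

theorem mem_firstBlock_of_col (b : SU (n + 3)) (hb : ∀ i, i ≠ 0 → SU.toMat b i 0 = 0) :
    b ∈ firstBlock (n + 3) := by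
  intro i j hij
  rcases hij with ⟨hj, hi⟩ | ⟨hi, hj⟩
  · have hj' : j = 0 := Fin.ext hj
    rw [hj', hb i fun h => hi (by rw [h]; rfl)]
  · have hi' : i = 0 := Fin.ext hi
    rw [hi', row_eq_zero_of_col (toMat_mem b) _ hb j fun h => hj (by rw [h]; rfl)]

theorem col_unit {d : ℕ} (g : SU d) (j : Fin d) :
    star (fun i => SU.toMat g i j) ⬝ᵥ (fun i => SU.toMat g i j) = 1 := by
  have h : (SU.toMat g)ᴴ * SU.toMat g = 1 := Matrix.mem_unitaryGroup_iff'.1 (toMat_mem g)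
  have := congr_fun (congr_fun h j) j
  rwa [Matrix.mul_apply, Matrix.one_apply_eq] at this

theorem exists_phase (z w : ℂ) (h : ‖z‖ = ‖w‖) : ∃ θ : ℂ, star θ * θ = 1 ∧ z = θ * w := by
  by_cases hw : w = 0
  · subst hw
    exact ⟨1, by simp, by simpa using h⟩
  · refine ⟨z / w, ?_, by field_simp⟩
    rw [Complex.star_def, Complex.conj_mul', norm_div, h, div_self (norm_ne_zero_iff.2 hw)]
    simp

/-- The double cosets of the lower-right block subgroup are separated by the modulus of the
upper-left entry. -/
theorem exists_doubleCoset (g g' : SU (n + 3)) (h : ‖SU.toMat g 0 0‖ = ‖SU.toMat g' 0 0‖) :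
    ∃ a ∈ firstBlock (n + 3), ∃ b ∈ firstBlock (n + 3), g = a * g' * b := by
  obtain ⟨θ, hθ, hz⟩ := exists_phase _ _ h
  have hone : (1 : Fin (n + 3)) ≠ 0 := by simp
  have hlast : (Fin.last (n + 2)) ≠ 1 := by
    intro h
    have := congrArg Fin.val h
    simp at this
  set u : Fin (n + 3) → ℂ := fun i => SU.toMat g i 0 with hu
  set u' : Fin (n + 3) → ℂ := fun i => SU.toMat g' i 0 with hu'
  have huu : star u ⬝ᵥ u = 1 := col_unit g 0
  have huu' : star (θ • u') ⬝ᵥ (θ • u') = 1 := by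
    rw [star_smul, smul_dotProduct, dotProduct_smul, col_unit g' 0, smul_smul, hθ, one_smul]
  have hle : ‖u 0‖ ^ 2 ≤ 1 := by
    have h1 := huu
    rw [star_dotProduct_self_eq_sum] at h1
    have h2 : ∑ i, ‖u i‖ ^ 2 = 1 := by exact_mod_cast h1
    rw [← h2]
    exact Finset.single_le_sum (f := fun i => ‖u i‖ ^ 2) (fun i _ => by positivity)
      (Finset.mem_univ 0)
  -- Both `u` and `θ • u'` can be moved to the normal form `v`, supported on the first two
  -- coordinates. It vanishes at the last coordinate since the dimension is at least three.
  set v : Fin (n + 3) → ℂ := Pi.single 0 (u 0) + Pi.single 1 ((√(1 - ‖u 0‖ ^ 2) : ℝ) : ℂ) with hv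
  have hvv : star v ⬝ᵥ v = 1 := by
    have e0 : v 0 = u 0 := by simp [hv, hone.symm]
    have e1 : v 1 = ((√(1 - ‖u 0‖ ^ 2) : ℝ) : ℂ) := by simp [hv, hone]
    rw [star_dotProduct_self_eq_sum, Finset.sum_eq_add_of_mem 0 1 (Finset.mem_univ _)
      (Finset.mem_univ _) hone.symm (fun c _ hc => by simp [hv, hc.1, hc.2]), e0, e1,
      Complex.norm_real, Real.norm_eq_abs, sq_abs, Real.sq_sqrt (by linarith)]
    simp
  have hvl : v (Fin.last _) = 0 := by
    simp [hv, hlast, (Fin.last_pos (n := n + 1)).ne']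
  obtain ⟨a, ha, hau⟩ := exists_firstBlock_mulVec_eq u v huu hvv (by simp [hv, hone.symm]) hvl
  obtain ⟨a', ha', hau'⟩ := exists_firstBlock_mulVec_eq (θ • u') v huu' hvv
    (by rw [Pi.smul_apply, smul_eq_mul]; simp only [hv, hu, hu', hz]; simp [hone.symm]) hvl
  refine ⟨a⁻¹ * a', mul_mem (inv_mem ha) ha', (a' * g')⁻¹ * (a * g), ?_, by group⟩
  apply mem_firstBlock_of_col
  intro i hi
  have hcol : ∀ (g : SU (n + 3)) (i), SU.toMat g i 0 = (SU.toMat g *ᵥ Pi.single 0 1) i := by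
    intro g i
    simp
  have hgu : SU.toMat g *ᵥ Pi.single 0 1 = u := by ext i; simp [hu]
  have hgu' : SU.toMat g' *ᵥ Pi.single 0 1 = u' := by ext i; simp [hu']
  have hinv : SU.toMat (a' * g')⁻¹ * SU.toMat (a' * g') = 1 := by
    rw [← toMat_mul, inv_mul_cancel, toMat_one]
  have hfin : SU.toMat ((a' * g')⁻¹ * (a * g)) *ᵥ Pi.single 0 1 = θ • Pi.single 0 1 := by
    rw [toMat_mul, toMat_mul a g, ← Matrix.mulVec_mulVec, ← Matrix.mulVec_mulVec, hgu, hau, ← hau',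
      Matrix.mulVec_smul, ← hgu', Matrix.mulVec_mulVec, ← toMat_mul a' g', Matrix.mulVec_smul,
      Matrix.mulVec_mulVec, hinv, Matrix.one_mulVec]
  rw [hcol, hfin]
  simp [hi]

namespace FinUnitaryRep

/-- The matrix coefficient of a vector fixed by the lower-right block subgroup depends only on the
modulus of the upper-left entry. -/
theorem coef_eq_of_norm_eq (π : FinUnitaryRep (SU (n + 3))) (η : Fin π.dim → ℂ)
    (hη : ∀ h ∈ firstBlock (n + 3), π.mat h *ᵥ η = η) (g g' : SU (n + 3))
    (h : ‖SU.toMat g 0 0‖ = ‖SU.toMat g' 0 0‖) : π.coef η g = π.coef η g' := by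
  obtain ⟨a, ha, b, hb, rfl⟩ := exists_doubleCoset g g' h
  rw [coef, coef, mat_mul, mat_mul, ← Matrix.mulVec_mulVec, hη b hb, ← Matrix.mulVec_mulVec,
    ← dotProduct_unitary (π.mat_mem a) η (π.mat g' *ᵥ η), hη a ha]

end FinUnitaryRep

end

/-! ### Lebesgue measure and the law of the upper-left entry -/

section

variable {n : ℕ}

/-- The quantity `|z₀|² / (|z₀|² + ∑_{j ∈ I} |z_{j+1}|²)`: the squared modulus of the first
coordinate of the normalized truncation of `z` to the coordinates `0` and `j + 1`, `j ∈ I`. -/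
noncomputable def ratio (I : Finset (Fin n)) (z : Fin (n + 1) → ℂ) : ℝ :=
  ‖z 0‖ ^ 2 / (‖z 0‖ ^ 2 + ∑ j ∈ I, ‖z j.succ‖ ^ 2)

theorem measurable_ratio (I : Finset (Fin n)) : Measurable (ratio I) := by
  have h : ∀ i : Fin (n + 1), Measurable fun z : Fin (n + 1) → ℂ => ‖z i‖ ^ 2 := fun i =>
    (measurable_pi_apply i).norm.pow_const 2
  exact (h 0).div ((h 0).add (Finset.measurable_fun_sum I fun j _ => h j.succ))

/-- Dilation invariance: whether `|z|² / (|z|² + c)` avoids `N` for almost every `z` does not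
depend on `c > 0`. -/
theorem ae_notMem_iff_of_pos (N : Set ℝ) (c : ℝ) (hc : 0 < c) :
    (∀ᵐ z : ℂ, ‖z‖ ^ 2 / (‖z‖ ^ 2 + c) ∉ N) ↔ ∀ᵐ z : ℂ, ‖z‖ ^ 2 / (‖z‖ ^ 2 + 1) ∉ N := by
  have hs : (√c)⁻¹ ≠ 0 := inv_ne_zero (Real.sqrt_ne_zero'.2 hc)
  have h := Measure.addHaar_preimage_smul (volume : Measure ℂ) hs
    {z : ℂ | ‖z‖ ^ 2 / (‖z‖ ^ 2 + 1) ∈ N}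
  have h2 : (fun x : ℂ => (√c)⁻¹ • x) ⁻¹' {z : ℂ | ‖z‖ ^ 2 / (‖z‖ ^ 2 + 1) ∈ N} =
      {z : ℂ | ‖z‖ ^ 2 / (‖z‖ ^ 2 + c) ∈ N} := by
    ext z
    have : ‖(√c)⁻¹ • z‖ ^ 2 / (‖(√c)⁻¹ • z‖ ^ 2 + 1) = ‖z‖ ^ 2 / (‖z‖ ^ 2 + c) := by
      rw [norm_smul, mul_pow, Real.norm_eq_abs, sq_abs, inv_pow, Real.sq_sqrt hc.le]
      field_simp
    change _ ∈ N ↔ _ ∈ N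
    rw [this]
  have h3 : ENNReal.ofReal |((√c)⁻¹ ^ Module.finrank ℝ ℂ)⁻¹| ≠ 0 := by
    rw [ne_eq, ENNReal.ofReal_eq_zero, not_le]
    positivity
  rw [h2] at h
  simp only [ae_iff, not_not]
  rw [h, mul_eq_zero, or_iff_right h3]

/-- By Fubini, `ratio I` avoids `N` almost everywhere iff the one-variable quantity
`|z|² / (|z|² + 1)` does; in particular the condition is independent of `I`. -/
theorem ae_ratio_notMem_iff (I : Finset (Fin n)) (hI : I.Nonempty) (N : Set ℝ)
    (hN : MeasurableSet N) :
    (∀ᵐ z : Fin (n + 1) → ℂ, ratio I z ∉ N) ↔ ∀ᵐ z : ℂ, ‖z‖ ^ 2 / (‖z‖ ^ 2 + 1) ∉ N := by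
  have hmp := volume_preserving_piFinSuccAbove (fun _ : Fin (n + 1) => ℂ) 0
  set S : Set (ℂ × (Fin n → ℂ)) :=
    {p | ‖p.1‖ ^ 2 / (‖p.1‖ ^ 2 + ∑ j ∈ I, ‖p.2 j‖ ^ 2) ∉ N} with hS
  have hf : Measurable fun p : ℂ × (Fin n → ℂ) =>
      ‖p.1‖ ^ 2 / (‖p.1‖ ^ 2 + ∑ j ∈ I, ‖p.2 j‖ ^ 2) := by
    have h1 : Measurable fun p : ℂ × (Fin n → ℂ) => ‖p.1‖ ^ 2 := measurable_fst.norm.pow_const 2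
    refine h1.div (h1.add (Finset.measurable_fun_sum I fun j _ => ?_))
    exact ((measurable_pi_apply j).comp measurable_snd).norm.pow_const 2
  have hSm : MeasurableSet S := hf hN.compl
  have e1 : (∀ᵐ z : Fin (n + 1) → ℂ, ratio I z ∉ N) ↔ ∀ᵐ p : ℂ × (Fin n → ℂ), p ∈ S := by
    rw [← hmp.map_eq, ae_map_iff (p := fun p => p ∈ S) hmp.measurable.aemeasurable hSm]
    rfl
  have e2 : (∀ᵐ p : ℂ × (Fin n → ℂ), p ∈ S) ↔
      ∀ᵐ w : Fin n → ℂ, ∀ᵐ z : ℂ, (z, w) ∈ S := by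
    rw [Measure.volume_eq_prod, Measure.ae_prod_iff_ae_ae (p := fun p => p ∈ S) hSm,
      Measure.ae_ae_comm (p := fun z w => (z, w) ∈ S) hSm]
  obtain ⟨j, hj⟩ := hI
  have hpos : ∀ᵐ w : Fin n → ℂ, 0 < ∑ j ∈ I, ‖w j‖ ^ 2 := by
    have : ∀ᵐ w : Fin n → ℂ, w j ≠ 0 := by
      rw [volume_pi]
      exact Measure.ae_eval_ne (fun _ : Fin n => (volume : Measure ℂ)) j 0
    filter_upwards [this] with w hw
    exact Finset.sum_pos' (fun i _ => by positivity) ⟨j, hj, by positivity⟩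
  rw [e1, e2]
  constructor
  · intro h
    obtain ⟨w, hw1, hw2⟩ := (h.and hpos).exists
    exact (ae_notMem_iff_of_pos N _ hw2).1 hw1
  · intro h
    filter_upwards [hpos] with w hw
    exact (ae_notMem_iff_of_pos N _ hw).2 h

theorem volume_preimage_mulVec_eq_zero {d : ℕ} (A : Matrix (Fin d) (Fin d) ℂ)
    (hA : A ∈ Matrix.unitaryGroup (Fin d) ℂ) (B : Set (Fin d → ℂ)) :
    volume ((fun z => A *ᵥ z) ⁻¹' B) = 0 ↔ volume B = 0 := by
  set f : (Fin d → ℂ) →ₗ[ℝ] (Fin d → ℂ) := A.mulVecLin.restrictScalars ℝ with hf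
  have h1 : Aᴴ * A = 1 := Matrix.mem_unitaryGroup_iff'.1 hA
  set g : (Fin d → ℂ) →ₗ[ℝ] (Fin d → ℂ) := Aᴴ.mulVecLin.restrictScalars ℝ with hg
  have hgf : g ∘ₗ f = LinearMap.id := by
    refine LinearMap.ext fun z => ?_
    change Aᴴ *ᵥ (A *ᵥ z) = z
    rw [Matrix.mulVec_mulVec, h1, Matrix.one_mulVec]
  have hdet : LinearMap.det f ≠ 0 := by
    intro h
    have := congrArg LinearMap.det hgf
    rw [LinearMap.det_comp, h, mul_zero, LinearMap.det_id] at this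
    exact zero_ne_one this
  have h := Measure.addHaar_preimage_linearMap (volume : Measure (Fin d → ℂ)) hdet B
  have h3 : ENNReal.ofReal |(LinearMap.det f)⁻¹| ≠ 0 := by
    rw [ne_eq, ENNReal.ofReal_eq_zero, not_le]
    positivity
  change volume (f ⁻¹' B) = 0 ↔ _
  rw [h, mul_eq_zero, or_iff_right h3]

/-- The squared modulus of the upper-left entry. -/
noncomputable def corner (g : SU (n + 1)) : ℝ := ‖SU.toMat g 0 0‖ ^ 2

theorem continuous_corner : Continuous (corner : SU (n + 1) → ℝ) :=
  (continuous_toMat_apply 0 0).norm.pow 2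

/-- Comparison of Haar measure on a compact group acting linearly with Lebesgue measure: if `H` acts
transitively enough on the truncated spheres, then `corner` avoids `N` Haar-almost surely iff
`ratio I` avoids `N` Lebesgue-almost everywhere. Both say that `ratio I (h⁻¹ z)` avoids `N` for almost
every pair `(h, z)`. -/
theorem ae_corner_iff_ae_ratio {H : Type*} [Group H] [TopologicalSpace H] [IsTopologicalGroup H]
    [SecondCountableTopology H] [MeasurableSpace H] [BorelSpace H] (μ : Measure H)
    [IsProbabilityMeasure μ] [μ.IsMulLeftInvariant] (ι : H →* SU (n + 1)) (hι : Continuous ι)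
    (I : Finset (Fin n)) (N : Set ℝ) (hN : MeasurableSet N)
    (hH : ∀ z : Fin (n + 1) → ℂ, z 0 ≠ 0 →
      ∃ k : H, ∀ h : H, ratio I (SU.toMat (ι h)⁻¹ *ᵥ z) = corner (ι (k⁻¹ * h))) :
    (∀ᵐ h ∂μ, corner (ι h) ∉ N) ↔ ∀ᵐ z : Fin (n + 1) → ℂ, ratio I z ∉ N := by
  set S : Set (H × (Fin (n + 1) → ℂ)) := {p | ratio I (SU.toMat (ι p.1)⁻¹ *ᵥ p.2) ∉ N} with hS
  have hact : Continuous fun p : H × (Fin (n + 1) → ℂ) => SU.toMat (ι p.1)⁻¹ *ᵥ p.2 :=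
    ((continuous_toMat _).comp (hι.comp continuous_fst).inv).matrix_mulVec continuous_snd
  have hSm : MeasurableSet S := ((measurable_ratio I).comp hact.measurable) hN.compl
  have hcomm : (∀ᵐ h ∂μ, ∀ᵐ z : Fin (n + 1) → ℂ, (h, z) ∈ S) ↔
      ∀ᵐ z : Fin (n + 1) → ℂ, ∀ᵐ h ∂μ, (h, z) ∈ S := Measure.ae_ae_comm hSm
  have e1 : ∀ h : H, (∀ᵐ z : Fin (n + 1) → ℂ, (h, z) ∈ S) ↔
      ∀ᵐ z : Fin (n + 1) → ℂ, ratio I z ∉ N := by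
    intro h
    have := volume_preimage_mulVec_eq_zero _ (toMat_mem (ι h)⁻¹) {z | ratio I z ∈ N}
    simp only [ae_iff, not_not, hS, Set.mem_ofPred_eq]
    exact this
  have e2 : ∀ z : Fin (n + 1) → ℂ, z 0 ≠ 0 →
      ((∀ᵐ h ∂μ, (h, z) ∈ S) ↔ ∀ᵐ h ∂μ, corner (ι h) ∉ N) := by
    intro z hz
    obtain ⟨k, hk⟩ := hH z hz
    simp only [hS, Set.mem_ofPred_eq, hk]
    exact eventually_mul_left_iff μ k⁻¹ (p := fun h => corner (ι h) ∉ N)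
  have hz : ∀ᵐ z : Fin (n + 1) → ℂ, z 0 ≠ 0 := by
    rw [volume_pi]
    exact Measure.ae_eval_ne (fun _ : Fin (n + 1) => (volume : Measure ℂ)) 0 0
  simp only [e1, Filter.eventually_const] at hcomm
  rw [hcomm]
  constructor
  · intro h
    filter_upwards [hz] with z hz
    exact (e2 z hz).2 h
  · intro h
    obtain ⟨z, hz1, hz2⟩ := (h.and hz).exists
    exact (e2 z hz2).1 hz1

end

/-! ### Comparison of the laws of the upper-left entry -/

section

variable {n : ℕ}

theorem ratio_univ (z : Fin (n + 1) → ℂ) :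
    ratio Finset.univ z = ‖z 0‖ ^ 2 / (star z ⬝ᵥ z).re := by
  rw [star_dotProduct_self_eq_sum, Complex.ofReal_re, Fin.sum_univ_succ, ratio]

/-- `SU(n+3)` is transitive on spheres, so `ratio univ (g⁻¹ z)` is the `corner` of a left translate of
`g`. The translating element carries the first basis vector to `z / ‖z‖`. -/
theorem exists_ratio_univ_eq_corner (z : Fin (n + 3) → ℂ) (hz : z 0 ≠ 0) :
    ∃ k : SU (n + 3), (z (Fin.last _) = 0 → k ∈ lastBlock (n + 3)) ∧
      ∀ g : SU (n + 3), ratio (n := n + 2) Finset.univ (SU.toMat g⁻¹ *ᵥ z) =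
        corner (n := n + 2) (k⁻¹ * g) := by
  set Q : ℝ := ∑ i, ‖z i‖ ^ 2 with hQ
  have hQ0 : 0 < Q := Finset.sum_pos' (fun i _ => by positivity) ⟨0, Finset.mem_univ _, by positivity⟩
  have hzz : star z ⬝ᵥ z = (Q : ℂ) := star_dotProduct_self_eq_sum z
  have hsq : ((√Q : ℝ) : ℂ) * (√Q : ℝ) = (Q : ℂ) := by
    rw [← Complex.ofReal_mul, Real.mul_self_sqrt hQ0.le]
  have hs0 : ((√Q : ℝ) : ℂ) ≠ 0 := Complex.ofReal_ne_zero.2 (Real.sqrt_ne_zero'.2 hQ0)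
  have hQ0' : (Q : ℂ) ≠ 0 := Complex.ofReal_ne_zero.2 hQ0.ne'
  obtain ⟨k, hk, hkS⟩ := exists_col_eq (((√Q : ℝ) : ℂ)⁻¹ • z) (by
    rw [star_smul, smul_dotProduct, dotProduct_smul, hzz, smul_smul, smul_eq_mul, ← hsq,
      star_inv₀, ← starRingEnd_apply, Complex.conj_ofReal]
    field_simp)
  refine ⟨k, fun h => hkS (by rw [Pi.smul_apply, h, smul_zero]), fun g => ?_⟩
  have hzk : z = ((√Q : ℝ) : ℂ) • (SU.toMat k).col 0 := by
    ext i
    rw [Pi.smul_apply, Matrix.col_apply, hk, Pi.smul_apply, smul_smul, mul_inv_cancel₀ hs0, one_smul]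
  have h0 : (SU.toMat g⁻¹ *ᵥ z) 0 = ((√Q : ℝ) : ℂ) * SU.toMat (g⁻¹ * k) 0 0 := by
    conv_lhs => rw [hzk]
    rw [Matrix.mulVec_smul, Pi.smul_apply, smul_eq_mul, toMat_mul, Matrix.mul_apply]
    rfl
  have hinv : ‖SU.toMat (g⁻¹ * k) 0 0‖ = ‖SU.toMat (k⁻¹ * g) 0 0‖ := by
    have : g⁻¹ * k = (k⁻¹ * g)⁻¹ := by group
    rw [this, toMat_inv, Matrix.conjTranspose_apply, norm_star]
  rw [ratio_univ, FinUnitaryRep.dotProduct_unitary (toMat_mem _), hzz, Complex.ofReal_re]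
  change ‖(SU.toMat g⁻¹ *ᵥ z) 0‖ ^ 2 / Q = ‖SU.toMat (k⁻¹ * g) 0 0‖ ^ 2
  rw [h0, norm_mul, mul_pow, hinv, Complex.norm_real, Real.norm_eq_abs, sq_abs, Real.sq_sqrt hQ0.le]
  field_simp

/-- Replacement of the last coordinate by `0`. -/
def trunc (z : Fin (n + 3) → ℂ) : Fin (n + 3) → ℂ := fun i => if i = Fin.last _ then 0 else z i

theorem trunc_mulVec (g : SU (n + 3)) (hg : g ∈ lastBlock (n + 3)) (z : Fin (n + 3) → ℂ) :
    trunc (SU.toMat g *ᵥ z) = SU.toMat g *ᵥ trunc z := by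
  have hval : ∀ i : Fin (n + 3), (i : ℕ) = n + 3 - 1 ↔ i = Fin.last (n + 2) := fun i => by
    rw [Fin.ext_iff]; rfl
  ext i
  simp only [trunc, Matrix.mulVec, dotProduct]
  by_cases hi : i = Fin.last (n + 2)
  · rw [if_pos hi]
    refine (Finset.sum_eq_zero fun j _ => ?_).symm
    by_cases hj : j = Fin.last (n + 2)
    · rw [if_pos hj, mul_zero]
    · rw [if_neg hj, hg i j (Or.inr ⟨(hval i).2 hi, fun h => hj ((hval j).1 h)⟩), zero_mul]
  · rw [if_neg hi]
    refine Finset.sum_congr rfl fun j _ => ?_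
    by_cases hj : j = Fin.last (n + 2)
    · rw [hg i j (Or.inl ⟨(hval j).2 hj, fun h => hi ((hval i).1 h)⟩), zero_mul, zero_mul]
    · rw [if_neg hj]

theorem ratio_erase_last (z : Fin (n + 3) → ℂ) :
    ratio (n := n + 2) (Finset.univ.erase (Fin.last (n + 1))) z =
      ratio (n := n + 2) Finset.univ (trunc z) := by
  have h0 : trunc z 0 = z 0 := if_neg (Fin.last_pos).ne
  rw [ratio, ratio, h0, ← Finset.sum_erase (a := Fin.last (n + 1)) Finset.univ (f := fun j => ‖trunc z j.succ‖ ^ 2)]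
  · congr 2
    refine Finset.sum_congr rfl fun j hj => ?_
    have : j.succ ≠ Fin.last (n + 2) := fun h => Finset.ne_of_mem_erase hj (by
      rwa [← Fin.succ_last, Fin.succ_inj] at h)
    rw [trunc, if_neg this]
  · simp [trunc]

/-- The law of `|g₀₀|²` for random `g` in `lastBlock` is absolutely continuous with respect to its
law for random `g` in the whole group. -/
theorem absolutelyContinuous_map_corner (μG : Measure (SU (n + 3))) [IsProbabilityMeasure μG]
    [μG.IsMulLeftInvariant] (μS : Measure (lastBlock (n + 3))) [IsProbabilityMeasure μS]
    [μS.IsMulLeftInvariant] (N : Set ℝ) (hN : MeasurableSet N)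
    (h : ∀ᵐ g ∂μG, corner (n := n + 2) g ∉ N) :
    ∀ᵐ g : lastBlock (n + 3) ∂μS, corner (n := n + 2) (g : SU (n + 3)) ∉ N := by
  have : SecondCountableTopology (lastBlock (n + 3)) :=
    TopologicalSpace.Subtype.secondCountableTopology _
  -- Nonempty because the dimension is at least three; in dimension two `corner` is constant on
  -- `lastBlock`.
  have hI : (Finset.univ.erase (Fin.last (n + 1))).Nonempty :=
    ⟨0, Finset.mem_erase.2 ⟨(Fin.last_pos).ne, Finset.mem_univ _⟩⟩
  have e1 := ae_corner_iff_ae_ratio (n := n + 2) μG (MonoidHom.id _) continuous_id Finset.univ N hN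
    (fun z hz => by
      obtain ⟨k, -, hk⟩ := exists_ratio_univ_eq_corner z hz
      exact ⟨k, hk⟩)
  have e2 := ae_corner_iff_ae_ratio (n := n + 2) μS (lastBlock (n + 3)).subtype
    continuous_subtype_val (Finset.univ.erase (Fin.last (n + 1))) N hN
    (fun z hz => by
      have h0 : trunc z 0 = z 0 := if_neg (Fin.last_pos).ne
      obtain ⟨k, hkS, hk⟩ := exists_ratio_univ_eq_corner (trunc z) (h0 ▸ hz)
      refine ⟨⟨k, hkS (if_pos rfl)⟩, fun g => ?_⟩
      rw [ratio_erase_last]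
      refine Eq.trans (congrArg _ (trunc_mulVec _ ((lastBlock (n + 3)).inv_mem g.2) z)) (hk g))
  refine e2.2 ((ae_ratio_notMem_iff _ hI N hN).2 ((ae_ratio_notMem_iff _ Finset.univ_nonempty N hN).1
    (e1.1 h)))

end

/-! ### The isotypical projection of an invariant vector -/

section

namespace FinUnitaryRep

/-- If `ξ` is of type `σ`, then `⟨η, ξ⟩ = ⟨p_σ η, ξ⟩`, and `‖p_σ η‖²` is controlled by the integrals
of `x ↦ ⟨η, ρ(x) η⟩` against the matrix coefficients of `σ`. -/
theorem norm_dotProduct_sq_le_sum {H : Type} [Group H] [TopologicalSpace H] [IsTopologicalGroup H]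
    [CompactSpace H] [MeasurableSpace H] [BorelSpace H] (μ : Measure H) [IsProbabilityMeasure μ]
    [μ.IsMulRightInvariant] (ρ σ : FinUnitaryRep H) (η ξ : Fin ρ.dim → ℂ) (hξ1 : star ξ ⬝ᵥ ξ = 1)
    (hξ : isoVecProj μ ρ σ ξ = ξ) :
    ‖star η ⬝ᵥ ξ‖ ^ 2 ≤
      (σ.dim : ℝ) ^ 3 * ∑ i, ∑ j, ‖∫ x, conj (σ.mat x i j) * ρ.coef η x ∂μ‖ := by
  have hcint : ∀ f : H → ℂ, Continuous f → Integrable f μ := fun f hf =>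
    hf.integrable_of_hasCompactSupport (HasCompactSupport.of_compactSpace _)
  have hχ : Continuous σ.char := σ.continuous_mat.matrix_trace
  have hstar : ∀ b, Continuous fun h => ((ρ.mat h)ᴴ *ᵥ η) b := fun b =>
    (continuous_apply b).comp
      (ρ.continuous_mat.matrix_conjTranspose.matrix_mulVec continuous_const)
  -- `v` is `p_σ η` up to the factor `dim σ`.
  set v : Fin ρ.dim → ℂ := fun b => ∫ h, σ.char h * ((ρ.mat h)ᴴ *ᵥ η) b ∂μ with hv
  have hvc : ∀ b, conj (v b) = ∫ h, conj (σ.char h) * conj (((ρ.mat h)ᴴ *ᵥ η) b) ∂μ := by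
    intro b
    simp only [hv, ← integral_conj, map_mul]
  have hsymm : ∀ h (y : Fin ρ.dim → ℂ), star η ⬝ᵥ (ρ.mat h *ᵥ y) =
      ∑ b, conj (((ρ.mat h)ᴴ *ᵥ η) b) * y b := by
    intro h y
    have : star ((ρ.mat h)ᴴ *ᵥ η) = star η ᵥ* ρ.mat h := by
      rw [Matrix.star_mulVec, Matrix.conjTranspose_conjTranspose]
    rw [Matrix.dotProduct_mulVec, ← this]
    rfl
  have hpair : ∀ y : Fin ρ.dim → ℂ, star v ⬝ᵥ y =
      ∫ h, conj (σ.char h) * (star η ⬝ᵥ (ρ.mat h *ᵥ y)) ∂μ := by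
    intro y
    simp only [hsymm, Finset.mul_sum]
    rw [integral_finsetSum]
    · refine Finset.sum_congr rfl fun b _ => ?_
      change conj (v b) * y b = _
      rw [hvc, ← integral_mul_const]
      simp only [mul_assoc]
    · intro b _
      exact hcint _ ((Complex.continuous_conj.comp hχ).mul
        ((Complex.continuous_conj.comp (hstar b)).mul continuous_const))
  have h1 : star η ⬝ᵥ ξ = (σ.dim : ℂ) * (star v ⬝ᵥ ξ) := by
    have hc : Continuous fun h => conj (σ.char h) • (ρ.mat h *ᵥ ξ) :=
      (Complex.continuous_conj.comp hχ).smul (ρ.continuous_mat.matrix_mulVec continuous_const)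
    have hI : ∀ a, ξ a = (σ.dim : ℂ) * ∫ h, conj (σ.char h) * (ρ.mat h *ᵥ ξ) a ∂μ := by
      intro a
      conv_lhs => rw [← hξ]
      rw [isoVecProj, Pi.smul_apply, smul_eq_mul]
      congr 1
      refine eval_integral (X := H) (E := fun _ : Fin ρ.dim => ℂ) (fun a => ?_) a
      exact hcint _ ((continuous_apply a).comp hc)
    have hcomp : ∀ a, Continuous fun h => (ρ.mat h *ᵥ ξ) a := fun a =>
      (continuous_apply a).comp (ρ.continuous_mat.matrix_mulVec continuous_const)
    rw [hpair]
    simp only [dotProduct, Finset.mul_sum]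
    rw [integral_finsetSum, Finset.mul_sum]
    · refine Finset.sum_congr rfl fun a _ => ?_
      rw [hI a, mul_left_comm, ← integral_const_mul]
      congr 2
      ext h
      ring
    · intro a _
      exact hcint _ ((Complex.continuous_conj.comp hχ).mul (continuous_const.mul (hcomp a)))
  set c : Fin σ.dim → Fin σ.dim → ℂ := fun i j => ∫ x, conj (σ.mat x i j) * ρ.coef η x ∂μ with hc
  have hentry : ∀ h i j, ‖σ.mat h i j‖ ≤ 1 := fun h i j =>
    entry_norm_bound_of_unitary (σ.mat_mem h) i j
  have hpair2 : ∀ h', star v ⬝ᵥ ((ρ.mat h')ᴴ *ᵥ η) =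
      ∑ i, ∑ j, conj (σ.mat h' j i) * c i j := by
    intro h'
    have e1 : ∀ h, star η ⬝ᵥ (ρ.mat h *ᵥ ((ρ.mat h')ᴴ *ᵥ η)) = ρ.coef η (h * h'⁻¹) := by
      intro h
      rw [coef, mat_mul, mat_inv, Matrix.mulVec_mulVec]
    have e2 : ∀ x, conj (σ.char (x * h')) * ρ.coef η x =
        ∑ i, ∑ j, conj (σ.mat h' j i) * (conj (σ.mat x i j) * ρ.coef η x) := by
      intro x
      have : σ.char (x * h') = ∑ i, ∑ j, σ.mat x i j * σ.mat h' j i := by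
        change (σ.mat (x * h')).trace = _
        rw [mat_mul, Matrix.trace]
        simp only [Matrix.diag_apply, Matrix.mul_apply]
      simp only [this, map_sum, map_mul, Finset.sum_mul]
      refine Finset.sum_congr rfl fun i _ => Finset.sum_congr rfl fun j _ => by ring
    have hcoef := ρ.continuous_coef η
    have hs := σ.continuous_mat_apply
    rw [hpair]
    simp only [e1]
    rw [← integral_mul_right_eq_self _ h']
    simp only [mul_inv_cancel_right, e2]
    rw [integral_finsetSum _ fun i _ => integrable_finsetSum _ fun j _ => hcint _ (by
      exact continuous_const.mul ((Complex.continuous_conj.comp (hs i j)).mul hcoef))]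
    refine Finset.sum_congr rfl fun i _ => ?_
    rw [integral_finsetSum _ fun j _ => hcint _ (by
      exact continuous_const.mul ((Complex.continuous_conj.comp (hs i j)).mul hcoef))]
    refine Finset.sum_congr rfl fun j _ => ?_
    rw [integral_const_mul]
  have hbound : ∀ h', ‖σ.char h' * (star v ⬝ᵥ ((ρ.mat h')ᴴ *ᵥ η))‖ ≤
      σ.dim * ∑ i, ∑ j, ‖c i j‖ := by
    intro h'
    rw [norm_mul]
    refine mul_le_mul ?_ ?_ (norm_nonneg _) (Nat.cast_nonneg _)
    · refine (norm_sum_le _ _).trans ((Finset.sum_le_sum fun i _ => hentry h' i i).trans ?_)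
      simp
    · rw [hpair2]
      refine (norm_sum_le _ _).trans (Finset.sum_le_sum fun i _ => (norm_sum_le _ _).trans
        (Finset.sum_le_sum fun j _ => ?_))
      rw [norm_mul, RCLike.norm_conj]
      exact mul_le_of_le_one_left (norm_nonneg _) (hentry _ _ _)
  have h2 : star v ⬝ᵥ v = ∫ h', σ.char h' * (star v ⬝ᵥ ((ρ.mat h')ᴴ *ᵥ η)) ∂μ := by
    simp only [dotProduct, Finset.mul_sum]
    rw [integral_finsetSum]
    · refine Finset.sum_congr rfl fun b _ => ?_
      change _ * (∫ h, _ ∂μ) = _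
      rw [← integral_const_mul]
      congr 1
      ext h
      ring
    · intro b _
      exact hcint _ (hχ.mul (continuous_const.mul (hstar b)))
  have h3 : (star v ⬝ᵥ v).re ≤ σ.dim * ∑ i, ∑ j, ‖c i j‖ := by
    refine (Complex.re_le_norm _).trans ?_
    rw [h2]
    refine (norm_integral_le_of_norm_le_const (Filter.Eventually.of_forall hbound)).trans ?_
    simp
  have h4 := norm_dotProduct_sq_le v ξ
  rw [hξ1, Complex.one_re, mul_one] at h4
  rw [h1, norm_mul, mul_pow, Complex.norm_natCast]
  calc (σ.dim : ℝ) ^ 2 * ‖star v ⬝ᵥ ξ‖ ^ 2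
      ≤ (σ.dim : ℝ) ^ 2 * (σ.dim * ∑ i, ∑ j, ‖c i j‖) := by
        gcongr
        exact h4.trans h3
    _ = _ := by ring

end FinUnitaryRep

end

/-! ### Weak decay along the upper-left block subgroup -/

section

variable {n : ℕ}

/-- Restricted to `lastBlock`, the matrix coefficients of `firstBlock`-fixed unit vectors in pairwise
inequivalent irreducible representations converge weakly to `0`. -/
theorem tendsto_integral_coef_lastBlock (μS : Measure (lastBlock (n + 3))) [IsProbabilityMeasure μS]
    [μS.IsMulLeftInvariant] (π : ℕ → FinUnitaryRep (SU (n + 3))) (hπ : ∀ k, (π k).IsIrreducible)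
    (hne : ∀ k l, k ≠ l → (π k).char ≠ (π l).char) (η : ∀ k, Fin (π k).dim → ℂ)
    (hη1 : ∀ k, star (η k) ⬝ᵥ η k = 1)
    (hη : ∀ k, ∀ h ∈ firstBlock (n + 3), (π k).mat h *ᵥ η k = η k)
    (w : lastBlock (n + 3) → ℂ) (hw : Continuous w) :
    Filter.Tendsto (fun k => ∫ h : lastBlock (n + 3), w h * (π k).coef (η k) h ∂μS)
      Filter.atTop (nhds 0) := by
  have hcint : ∀ f : lastBlock (n + 3) → ℂ, Continuous f → Integrable f μS := fun f hf =>
    hf.integrable_of_hasCompactSupport (HasCompactSupport.of_compactSpace _)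
  have hcoef : ∀ k, Continuous fun h : lastBlock (n + 3) => (π k).coef (η k) h := fun k =>
    ((π k).continuous_coef (η k)).comp continuous_subtype_val
  set μG : Measure (SU (n + 3)) := Measure.haarMeasure ⊤ with hμG
  have : IsProbabilityMeasure μG := ⟨Measure.haarMeasure_self (K₀ := (⊤ : TopologicalSpace.PositiveCompacts (SU (n + 3))))⟩
  set cor : SU (n + 3) → ℝ := corner (n := n + 2) with hcor
  have hcorc : Continuous cor := continuous_corner
  set T : SU (n + 3) → Set.range cor := Set.rangeFactorization cor with hTdef
  have hT : Continuous T := hcorc.subtype_mk _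
  have hTs : Function.Surjective T := Set.rangeFactorization_surjective
  have hq : Topology.IsQuotientMap T := hT.isClosedMap.isQuotientMap hT hTs
  -- The coefficients descend to continuous functions on the range of `corner`, since `T` is a
  -- quotient map.
  set Ψ : ℕ → Set.range cor → ℂ := fun k x => (π k).coef (η k) (Function.surjInv hTs x) with hΨdef
  have hΨT : ∀ k g, Ψ k (T g) = (π k).coef (η k) g := by
    intro k g
    refine (π k).coef_eq_of_norm_eq (η k) (hη k) _ _ ?_
    have h1 : cor (Function.surjInv hTs (T g)) = cor g :=
      congrArg Subtype.val (Function.surjInv_eq hTs (T g))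
    exact (pow_left_inj₀ (norm_nonneg _) (norm_nonneg _) two_ne_zero).1 h1
  have hΨ : ∀ k, Continuous (Ψ k) := fun k => hq.continuous_iff.2 (by
    have : Ψ k ∘ T = (π k).coef (η k) := funext (hΨT k)
    rw [this]
    exact (π k).continuous_coef _)
  have hTS : Continuous fun h : lastBlock (n + 3) => T h := hT.comp continuous_subtype_val
  have hac : μS.map (fun h : lastBlock (n + 3) => T h) ≪ μG.map T := by
    refine Measure.AbsolutelyContinuous.mk fun s hs h0 => ?_
    obtain ⟨N, hN, rfl⟩ := hs
    rw [Measure.map_apply hT.measurable (measurable_subtype_coe hN)] at h0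
    rw [Measure.map_apply hTS.measurable (measurable_subtype_coe hN)]
    have h2 : ∀ᵐ g ∂μG, corner (n := n + 2) g ∉ N := by
      rw [ae_iff]
      simp only [not_not]
      exact h0
    have h3 := absolutelyContinuous_map_corner μG μS N hN h2
    rw [ae_iff] at h3
    simp only [not_not] at h3
    exact h3
  -- A nonnegative weight `f` is absorbed into the measure.
  have key : ∀ f : lastBlock (n + 3) → NNReal, Continuous f →
      Filter.Tendsto (fun k => ∫ h : lastBlock (n + 3), (f h : ℂ) * (π k).coef (η k) h ∂μS)
        Filter.atTop (nhds 0) := by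
    intro f hf
    have hfin : IsFiniteMeasure (μS.withDensity fun h => (f h : ENNReal)) := by
      refine isFiniteMeasure_withDensity ?_
      have := (hcint (fun h => ((f h : ℝ) : ℂ)) (by fun_prop)).2
      rw [HasFiniteIntegral] at this
      refine ne_of_lt (lt_of_le_of_lt (lintegral_mono fun h => ?_) this)
      simp [enorm]
    have := tendsto_integral_of_absolutelyContinuous μG T hT Ψ hΨ
      (fun k => ⟨1, by
        rw [hΨT, FinUnitaryRep.coef, FinUnitaryRep.mat_one, Matrix.one_mulVec, hη1]
        exact one_ne_zero⟩)
      (fun k x => (π k).norm_coef_le (η k) (hη1 k) _)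
      (fun k l hkl => by
        simp only [hΨT]
        exact FinUnitaryRep.integral_coef_mul_conj_eq_zero μG _ _ (hπ k) (hπ l) (hne k l hkl) _ _)
      ((μS.withDensity fun h => (f h : ENNReal)).map (fun h : lastBlock (n + 3) => T h))
      (((withDensity_absolutelyContinuous _ _).map
        hTS.measurable).trans hac)
    refine this.congr fun k => ?_
    rw [integral_map hTS.aemeasurable
      (hΨ k).aestronglyMeasurable, integral_withDensity_eq_integral_smul hf.measurable]
    simp only [hΨT]
    rfl
  have hdec : ∀ h, w h =
      ((Real.toNNReal (w h).re : ℂ) - (Real.toNNReal (-(w h).re) : ℂ)) +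
        Complex.I * ((Real.toNNReal (w h).im : ℂ) - (Real.toNNReal (-(w h).im) : ℂ)) := by
    intro h
    have e : ∀ x : ℝ, ((Real.toNNReal x : ℝ) : ℂ) - ((Real.toNNReal (-x) : ℝ) : ℂ) = (x : ℂ) := by
      intro x
      rw [← Complex.ofReal_sub, Real.coe_toNNReal', Real.coe_toNNReal',
        max_zero_sub_max_neg_zero_eq_self]
    have e1 := e (w h).re
    have e2 := e (w h).im
    refine Eq.trans ?_ (congrArg₂ (fun a b => a + Complex.I * b) e1.symm e2.symm)
    rw [mul_comm]
    exact (Complex.re_add_im _).symm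
  have c1 : Continuous fun h => Real.toNNReal (w h).re := by fun_prop
  have c2 : Continuous fun h => Real.toNNReal (-(w h).re) := by fun_prop
  have c3 : Continuous fun h => Real.toNNReal (w h).im := by fun_prop
  have c4 : Continuous fun h => Real.toNNReal (-(w h).im) := by fun_prop
  have hlim := ((key _ c1).sub (key _ c2)).add
    (((key _ c3).sub (key _ c4)).const_mul Complex.I)
  simp only [sub_zero, mul_zero, add_zero] at hlim
  refine hlim.congr fun k => ?_
  have hi : ∀ f : lastBlock (n + 3) → NNReal, Continuous f →
      Integrable (fun h : lastBlock (n + 3) => (f h : ℂ) * (π k).coef (η k) h) μS := by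
    intro f hf
    refine hcint _ (Continuous.mul ?_ (hcoef k))
    fun_prop
  have hi2 : ∀ f g : lastBlock (n + 3) → NNReal, Continuous f → Continuous g →
      Integrable (fun h : lastBlock (n + 3) =>
        (f h : ℂ) * (π k).coef (η k) h - (g h : ℂ) * (π k).coef (η k) h) μS :=
    fun f g hf hg => (hi f hf).sub (hi g hg)
  rw [← integral_sub (hi _ c1) (hi _ c2), ← integral_sub (hi _ c3) (hi _ c4),
    ← integral_const_mul, ← integral_add (hi2 _ _ c1 c2) ((hi2 _ _ c3 c4).const_mul _)]
  congr 1
  ext h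
  conv_rhs => rw [hdec h]
  ring

end

/-- The key orthogonality estimate (Lemma 5.4 of the paper): for `n ≥ 3`, an irreducible
representation `σ` of the upper-left block subgroup `K_S ≅ S(U(n−1)×U(1))` of `SU(n)` and
`ε > 0`, only finitely many irreducible representations `π` of `SU(n)` (up to unitary
equivalence, i.e. up to equality of characters) contain a unit vector `ξ` of type `σ` and a
unit vector `η` fixed by the lower-right block subgroup `K_T`, with `|⟨η, ξ⟩| > ε`. -/
theorem essential_orthotypicality_base_case
    (m : ℕ) (hm : 3 ≤ m)
    (μS : Measure (lastBlock m)) [μS.IsHaarMeasure] [IsProbabilityMeasure μS]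
    (σ : FinUnitaryRep (lastBlock m)) (hσ : σ.IsIrreducible)
    (ε : ℝ) (hε : 0 < ε) :
    {χ : SU m → ℂ | ∃ π : FinUnitaryRep (SU m), π.IsIrreducible ∧ χ = π.char ∧
      ∃ ξ η : Fin π.dim → ℂ,
        star ξ ⬝ᵥ ξ = 1 ∧ star η ⬝ᵥ η = 1 ∧
        isoVecProj μS (π.res (lastBlock m).subtype continuous_subtype_val) σ ξ = ξ ∧
        (∀ h : firstBlock m,
          Matrix.mulVec ((π.ρ (h : SU m) : Matrix (Fin π.dim) (Fin π.dim) ℂ)) η = η) ∧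
        ε < ‖star η ⬝ᵥ ξ‖}.Finite := by
  obtain ⟨n, rfl⟩ : ∃ n, m = n + 3 := ⟨m - 3, by omega⟩
  by_contra hinf
  -- Otherwise there is a sequence of representations with pairwise distinct characters.
  set e := Set.Infinite.natEmbedding _ hinf with he
  choose π hπ hχ ξ η hξ1 hη1 hξ hη hlt using fun k => (e k).2
  have hne : ∀ k l, k ≠ l → (π k).char ≠ (π l).char := fun k l hkl h =>
    hkl (e.injective (Subtype.ext (by rw [hχ k, hχ l, h])))
  have : μS.IsMulRightInvariant := isMulRightInvariant_of_compact μS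
  have hlim : Filter.Tendsto (fun k => (σ.dim : ℝ) ^ 3 * ∑ i, ∑ j,
      ‖∫ x : lastBlock (n + 3), conj (σ.mat x i j) * (π k).coef (η k) x ∂μS‖)
      Filter.atTop (nhds ((σ.dim : ℝ) ^ 3 * ∑ i : Fin σ.dim, ∑ j : Fin σ.dim, 0)) := by
    refine Filter.Tendsto.const_mul _ (tendsto_finsetSum _ fun i _ => tendsto_finsetSum _
      fun j _ => ?_)
    have := tendsto_integral_coef_lastBlock μS π hπ hne η hη1 (fun k h hh => hη k ⟨h, hh⟩)
      (fun x => conj (σ.mat x i j)) (Complex.continuous_conj.comp (σ.continuous_mat_apply i j))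
    simpa only [norm_zero] using this.norm
  simp only [Finset.sum_const_zero, mul_zero] at hlim
  obtain ⟨k, hk⟩ := (hlim.eventually (gt_mem_nhds (pow_pos hε 2))).exists
  have hb := FinUnitaryRep.norm_dotProduct_sq_le_sum μS
    ((π k).res (lastBlock (n + 3)).subtype continuous_subtype_val) σ (η k) (ξ k) (hξ1 k) (hξ k)
  have h1 : ε ^ 2 < ‖star (η k) ⬝ᵥ ξ k‖ ^ 2 := pow_lt_pow_left₀ (hlt k) hε.le two_ne_zero
  exact absurd (h1.trans_le (hb.trans_lt hk).le) (lt_irrefl _)
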